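/- arXiv:1812.06720 — 4 statements merged into one kernel-verified Lean document; each statement's English description precedes it below -/
import Mathlib

section
/- Under the assumption that μ_i ≠ 0 for every i = 0,…,N−1, the matrix A factors as A = L·U, where L is the lower triangular band matrix with L i i = μ_i, L i (i−1) = δ_i, L i (i−2) = ξ_i, L i (i−3) = c*_i and all other entries 0, and U is the unit upper triangular band matrix with U i i = 1, U i (i+1) = α_i, U i (i+2) = β_i, U i (i+3) = γ_i and all other entries 0. -/
/-!
Row `i` of `L` is supported on the columns `i, i-1, i-2, i-3`, so by `mul_entry`
`(L U) i j = μ_i U i j + δ_i U (i-1) j + ξ_i U (i-2) j + c*_i U (i-3) j`, where `U` is extended to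
integer indices by `uent`; the terms with negative row index vanish because `α`, `β`, `γ` do.
For `j - i ∈ {-3, …, 3}` the equation `A i j = (L U) i j` is a rearrangement of one of the defining
recursions (those for `α`, `β`, `γ` use `μ_i ≠ 0`); for other `j` both sides are zero.
-/

open Matrix Finset

/-- The `(i, j)` entry of the `N × N` matrix `A`, at integer indices,
with the convention that out-of-range entries are `0`. -/
def ent {K : Type*} [Field K] {N : ℕ} (A : Matrix (Fin N) (Fin N) K) (i j : ℤ) : K :=
  if h : 0 ≤ i ∧ i < (N : ℤ) ∧ 0 ≤ j ∧ j < (N : ℤ) then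
    A ⟨i.toNat, by omega⟩ ⟨j.toNat, by omega⟩
  else 0

/-- The value of a vector `y ∈ K^N` at an integer index, with the convention
that out-of-range values are `0`. -/
def vent {K : Type*} [Field K] {N : ℕ} (y : Fin N → K) (i : ℤ) : K :=
  if h : 0 ≤ i ∧ i < (N : ℤ) then y ⟨i.toNat, by omega⟩ else 0

/-- `A` is heptadiagonal: entries vanish at distance `> 3` from the diagonal. -/
def Heptadiagonal {K : Type*} [Field K] {N : ℕ} (A : Matrix (Fin N) (Fin N) K) : Prop :=
  ∀ i j : Fin N, 3 < |(i : ℤ) - (j : ℤ)| → A i j = 0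

/-- The sequences `δ, ξ, μ, α, β, γ` of the symbolic algorithm for a heptadiagonal
matrix `A`, written with the subdiagonals `a*_i = A i (i-1)`, `b*_i = A i (i-2)`,
`c*_i = A i (i-3)`, the diagonal `d_i = A i i` and the superdiagonals
`a_i = A i (i+1)`, `b_i = A i (i+2)`, `c_i = A i (i+3)`.  All terms with negative
index are `0`. -/
def AlgSeqs {K : Type*} [Field K] {N : ℕ} (A : Matrix (Fin N) (Fin N) K)
    (δ ξ μ α β γ : ℤ → K) : Prop :=
  (∀ i : ℤ, i < 0 → δ i = 0 ∧ ξ i = 0 ∧ μ i = 0 ∧ α i = 0 ∧ β i = 0 ∧ γ i = 0) ∧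
  (∀ i : ℤ, 0 ≤ i → i < (N : ℤ) →
    δ i = ent A i (i - 1) - α (i - 2) * ent A i (i - 2)
        - ent A i (i - 3) * (β (i - 3) - α (i - 3) * α (i - 2)) ∧
    ξ i = ent A i (i - 2) - α (i - 3) * ent A i (i - 3) ∧
    μ i = ent A i i - α (i - 1) * δ i - β (i - 2) * ξ i - γ (i - 3) * ent A i (i - 3) ∧
    α i = (ent A i (i + 1) - β (i - 1) * δ i - γ (i - 2) * ξ i) / μ i ∧
    β i = (ent A i (i + 2) - γ (i - 1) * δ i) / μ i ∧
    γ i = ent A i (i + 3) / μ i)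

/-- The `k`-th leading principal minor of `A` : the determinant of the
`(k+1) × (k+1)` top-left submatrix. -/
def lpm {K : Type*} [Field K] {N : ℕ} (A : Matrix (Fin N) (Fin N) K) (k : ℕ)
    (hk : k + 1 ≤ N) : K :=
  (A.submatrix (Fin.castLE hk) (Fin.castLE hk)).det

/-- The `k`-th leading principal minor of `A`, defined as `0` out of range. -/
def lpm' {K : Type*} [Field K] {N : ℕ} (A : Matrix (Fin N) (Fin N) K) (k : ℕ) : K :=
  if h : k + 1 ≤ N then lpm A k h else 0

/-- The lower triangular band factor `L` of the algorithm:
`L i i = μ i`, `L i (i-1) = δ i`, `L i (i-2) = ξ i`, `L i (i-3) = c*_i`. -/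
def Lmat {K : Type*} [Field K] {N : ℕ} (A : Matrix (Fin N) (Fin N) K)
    (δ ξ μ : ℤ → K) : Matrix (Fin N) (Fin N) K :=
  Matrix.of fun i j : Fin N =>
    if (i : ℤ) = (j : ℤ) then μ (i : ℤ)
    else if (i : ℤ) = (j : ℤ) + 1 then δ (i : ℤ)
    else if (i : ℤ) = (j : ℤ) + 2 then ξ (i : ℤ)
    else if (i : ℤ) = (j : ℤ) + 3 then ent A (i : ℤ) ((i : ℤ) - 3)
    else 0

/-- The unit upper triangular band factor `U` of the algorithm:
`U i i = 1`, `U i (i+1) = α i`, `U i (i+2) = β i`, `U i (i+3) = γ i`. -/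
def Umat {K : Type*} [Field K] (N : ℕ) (α β γ : ℤ → K) : Matrix (Fin N) (Fin N) K :=
  Matrix.of fun i j : Fin N =>
    if (j : ℤ) = (i : ℤ) then 1
    else if (j : ℤ) = (i : ℤ) + 1 then α (i : ℤ)
    else if (j : ℤ) = (i : ℤ) + 2 then β (i : ℤ)
    else if (j : ℤ) = (i : ℤ) + 3 then γ (i : ℤ)
    else 0

/-- The entries of `Umat`, as a function of integer indices. -/
def uent {K : Type*} [Field K] (α β γ : ℤ → K) (i j : ℤ) : K :=
  if j = i then 1
  else if j = i + 1 then α i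
  else if j = i + 2 then β i
  else if j = i + 3 then γ i
  else 0

/-- Summing over `Fin N` against the indicator of `i = k + m` picks out `f (i - m)`; when `i - m`
is negative there is no such `k`, and `f (i - m)` vanishes. -/
lemma sum_shift {K : Type*} [Field K] {N : ℕ} (i : Fin N) (m : ℤ) (hm : 0 ≤ m) (x : K)
    (f : ℤ → K) (hf : ∀ k < 0, f k = 0) :
    (∑ k : Fin N, if (i : ℤ) = (k : ℤ) + m then x * f k else 0) = x * f ((i : ℤ) - m) := by
  have hi := i.isLt
  by_cases h : (i : ℤ) - m < 0
  · rw [hf _ h, mul_zero]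
    refine Finset.sum_eq_zero fun k _ => if_neg ?_
    omega
  · rw [Finset.sum_eq_single (⟨((i : ℤ) - m).toNat, by omega⟩ : Fin N)]
    · have e : ((((i : ℤ) - m).toNat : ℕ) : ℤ) = (i : ℤ) - m := by omega
      simp [e]
    · intro k _ hk
      refine if_neg fun h' => hk (Fin.ext ?_)
      simp only
      omega
    · simp

lemma ent_coe {K : Type*} [Field K] {N : ℕ} (A : Matrix (Fin N) (Fin N) K) (i j : Fin N) :
    ent A (i : ℤ) (j : ℤ) = A i j := by
  simp [ent]

/-- Row `i` of `L` meets column `j` of `U` in at most four terms. No boundary cases remain, since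
`U` extended to negative row indices vanishes on the columns `j ≥ 0`. -/
lemma mul_entry {K : Type*} [Field K] {N : ℕ} (A : Matrix (Fin N) (Fin N) K)
    (δ ξ μ α β γ : ℤ → K) (hneg : ∀ i : ℤ, i < 0 → α i = 0 ∧ β i = 0 ∧ γ i = 0)
    (i j : Fin N) :
    (Lmat A δ ξ μ * Umat N α β γ) i j =
      μ i * uent α β γ i j + δ i * uent α β γ ((i : ℤ) - 1) j
        + ξ i * uent α β γ ((i : ℤ) - 2) j
        + ent A i ((i : ℤ) - 3) * uent α β γ ((i : ℤ) - 3) j := by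
  have hu : ∀ k : ℤ, k < 0 → uent α β γ k j = 0 := by
    intro k hk
    obtain ⟨h1, h2, h3⟩ := hneg k hk
    have h0 : ¬ ((j : ℤ) = k) := by omega
    simp [uent, h0, h1, h2, h3]
  have key := fun (m : ℤ) (hm : 0 ≤ m) (x : K) =>
    sum_shift i m hm x (fun k => uent α β γ k j) hu
  have k0 := key 0 le_rfl (μ i)
  rw [sub_zero] at k0
  rw [← k0, ← key 1 (by norm_num), ← key 2 (by norm_num), ← key 3 (by norm_num),
    ← Finset.sum_add_distrib, ← Finset.sum_add_distrib, ← Finset.sum_add_distrib,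
    Matrix.mul_apply]
  refine Finset.sum_congr rfl fun k _ => ?_
  have e : Umat N α β γ k j = uent α β γ k j := rfl
  rw [e]
  simp only [Lmat, Matrix.of_apply]
  split_ifs <;> first | omega | simp

/-- if all pivots `μ i` are nonzero, then `A = L * U` with `L` the lower
triangular band matrix and `U` the unit upper triangular band matrix of the algorithm. -/
theorem heptadiagonal_LU_factorization {K : Type*} [Field K] {N : ℕ} (hN : 1 ≤ N)
    (A : Matrix (Fin N) (Fin N) K) (hA : Heptadiagonal A)
    (δ ξ μ α β γ : ℤ → K) (hseq : AlgSeqs A δ ξ μ α β γ)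
    (hμ : ∀ i : ℤ, 0 ≤ i → i < (N : ℤ) → μ i ≠ 0) :
    A = Lmat A δ ξ μ * Umat N α β γ := by
  obtain ⟨hneg, hrec⟩ := hseq
  ext i j
  rw [mul_entry A δ ξ μ α β γ (fun k hk => (hneg k hk).2.2.2) i j]
  have hi := i.isLt
  have hμi := hμ i (by omega) (by omega)
  obtain ⟨hδ, hξ, hμ', hα, hβ, hγ⟩ := hrec i (by omega) (by omega)
  rw [eq_div_iff hμi] at hα hβ hγ
  by_cases hband : 3 < |(i : ℤ) - (j : ℤ)|
  · rw [hA i j hband]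
    rw [lt_abs] at hband
    have hz : ∀ m : ℤ, 0 ≤ m → m ≤ 3 → ((j : ℤ) < i - 3 ∨ (i : ℤ) + 3 < j) →
        uent α β γ ((i : ℤ) - m) j = 0 := by
      intro m hm0 hm3 h
      simp only [uent]
      split_ifs <;> first | omega | rfl
    have h : (j : ℤ) < i - 3 ∨ (i : ℤ) + 3 < j := by omega
    have hz0 := hz 0 (by norm_num) (by norm_num) h
    rw [sub_zero] at hz0
    rw [hz0, hz 1 (by norm_num) (by norm_num) h, hz 2 (by norm_num) (by norm_num) h,
      hz 3 (by norm_num) (by norm_num) h]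
    simp
  · rw [← ent_coe A i j]
    rw [not_lt, abs_le] at hband
    obtain ⟨d, hd⟩ : ∃ d : ℤ, (j : ℤ) = i + d := ⟨j - i, by ring⟩
    have hd1 : -3 ≤ d := by omega
    have hd2 : d ≤ 3 := by omega
    rw [hd]
    clear hband hd hμ hneg hrec
    generalize (i : ℤ) = n at *
    -- On the diagonal at offset `d`, all conditions in `uent` become numeral comparisons.
    have hu : ∀ m : ℤ, uent α β γ (n - m) (n + d) =
        if d + m = 0 then 1 else if d + m = 1 then α (n - m) else if d + m = 2 then β (n - m)
        else if d + m = 3 then γ (n - m) else 0 := by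
      intro m
      simp only [uent]
      split_ifs <;> first | omega | rfl
    have hu0 := hu 0
    rw [sub_zero] at hu0
    rw [hu0, hu 1, hu 2, hu 3]
    clear hu hu0
    interval_cases d <;> norm_num [← sub_eq_add_neg]
    · linear_combination -hξ
    · linear_combination -hδ - α (n - 2) * hξ
    · linear_combination -hμ'
    · linear_combination -hα
    · linear_combination -hβ
    · linear_combination -hγ
end

section
/- Under the assumption that μ_i ≠ 0 for every i = 0,…,N−1, for each k = 0,…,N−1 the k-th leading principal minor of A equals the product of the first k+1 pivots: M_k = ∏_{j=0}^{k} μ_j. Consequently each pivot is the ratio of consecutive leading principal minors: μ_k = M_k / M_{k−1}, where M_{−1} = 1. -/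
/-!
The recursion for `δ, ξ, μ, α, β, γ` is Gaussian elimination: when no pivot vanishes it says,
diagonal by diagonal, that `A = L U` with `L` the lower triangular band matrix with diagonal `μ`
and `U` the unit upper triangular band matrix (`ent_eq_window`). Triangularity makes the leading
blocks multiply on their own (`submatrix_eq_mul`), so each leading minor of `A` is the product of
the diagonal entries of the corresponding block of `L` (`lpm_eq_prod`). The ratio formula follows
by dividing two consecutive products.
-/

open Matrix Finset

/-- The entries of `Lmat` as a function of integer indices, with `c i` in place of
`A i (i-3)`. -/
def lowerEntry {K : Type*} [Field K] (c δ ξ μ : ℤ → K) (i j : ℤ) : K :=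
  if i = j then μ i
  else if i = j + 1 then δ i
  else if i = j + 2 then ξ i
  else if i = j + 3 then c i
  else 0

/-- The entries of `Umat` as a function of integer indices. -/
def upperEntry {K : Type*} [Field K] (α β γ : ℤ → K) (i j : ℤ) : K :=
  if j = i then 1
  else if j = i + 1 then α i
  else if j = i + 2 then β i
  else if j = i + 3 then γ i
  else 0

theorem upperEntry_diag0 {K : Type*} [Field K] (α β γ : ℤ → K) {i j : ℤ} (h : j = i) :
    upperEntry α β γ i j = 1 := by
  unfold upperEntry
  rw [if_pos h]

theorem upperEntry_diag1 {K : Type*} [Field K] (α β γ : ℤ → K) {i j : ℤ} (h : j = i + 1) :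
    upperEntry α β γ i j = α i := by
  unfold upperEntry
  rw [if_neg (by omega), if_pos h]

theorem upperEntry_diag2 {K : Type*} [Field K] (α β γ : ℤ → K) {i j : ℤ} (h : j = i + 2) :
    upperEntry α β γ i j = β i := by
  unfold upperEntry
  rw [if_neg (by omega), if_neg (by omega), if_pos h]

theorem upperEntry_diag3 {K : Type*} [Field K] (α β γ : ℤ → K) {i j : ℤ} (h : j = i + 3) :
    upperEntry α β γ i j = γ i := by
  unfold upperEntry
  rw [if_neg (by omega), if_neg (by omega), if_neg (by omega), if_pos h]

theorem upperEntry_off {K : Type*} [Field K] (α β γ : ℤ → K) {i j : ℤ}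
    (h : j < i ∨ i + 3 < j) : upperEntry α β γ i j = 0 := by
  unfold upperEntry
  rw [if_neg (by omega), if_neg (by omega), if_neg (by omega), if_neg (by omega)]

theorem lowerEntry_diag0 {K : Type*} [Field K] (c δ ξ μ : ℤ → K) {i j : ℤ} (h : i = j) :
    lowerEntry c δ ξ μ i j = μ i := by
  unfold lowerEntry
  rw [if_pos h]

theorem lowerEntry_diag1 {K : Type*} [Field K] (c δ ξ μ : ℤ → K) {i j : ℤ} (h : i = j + 1) :
    lowerEntry c δ ξ μ i j = δ i := by
  unfold lowerEntry
  rw [if_neg (by omega), if_pos h]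

theorem lowerEntry_diag2 {K : Type*} [Field K] (c δ ξ μ : ℤ → K) {i j : ℤ} (h : i = j + 2) :
    lowerEntry c δ ξ μ i j = ξ i := by
  unfold lowerEntry
  rw [if_neg (by omega), if_neg (by omega), if_pos h]

theorem lowerEntry_diag3 {K : Type*} [Field K] (c δ ξ μ : ℤ → K) {i j : ℤ} (h : i = j + 3) :
    lowerEntry c δ ξ μ i j = c i := by
  unfold lowerEntry
  rw [if_neg (by omega), if_neg (by omega), if_neg (by omega), if_pos h]

theorem lowerEntry_off {K : Type*} [Field K] (c δ ξ μ : ℤ → K) {i j : ℤ}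
    (h : i < j ∨ j + 3 < i) : lowerEntry c δ ξ μ i j = 0 := by
  unfold lowerEntry
  rw [if_neg (by omega), if_neg (by omega), if_neg (by omega), if_neg (by omega)]

theorem ent_natCast {K : Type*} [Field K] {N : ℕ} (A : Matrix (Fin N) (Fin N) K)
    (i j : Fin N) : ent A (i : ℕ) (j : ℕ) = A i j := by
  unfold ent
  rw [dif_pos (by omega)]
  rfl

theorem ent_eq_zero_of_neg {K : Type*} [Field K] {N : ℕ} (A : Matrix (Fin N) (Fin N) K)
    (i j : ℤ) (hj : j < 0) : ent A i j = 0 := by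
  unfold ent
  rw [dif_neg (by omega)]

theorem upperEntry_of_neg {K : Type*} [Field K] {α β γ : ℤ → K}
    (h : ∀ i : ℤ, i < 0 → α i = 0 ∧ β i = 0 ∧ γ i = 0) (i j : ℤ) (hi : i < 0) (hj : 0 ≤ j) :
    upperEntry α β γ i j = 0 := by
  obtain ⟨h1, h2, h3⟩ := h i hi
  unfold upperEntry
  rw [if_neg (by omega), h1, h2, h3]
  simp

/-- A sum of values of `f`, supported on the window `{i-3, …, i}` and on nonnegative
indices, has only four terms; those of negative index are harmless because they vanish. -/
theorem sum_window {K : Type*} [Field K] (f : ℤ → K) (n i : ℕ) (hi : i < n)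
    (hneg : ∀ m : ℤ, m < 0 → f m = 0) (hgt : ∀ m : ℤ, (i : ℤ) < m → f m = 0)
    (hlt : ∀ m : ℤ, m < (i : ℤ) - 3 → f m = 0) :
    ∑ m : Fin n, f ((m : ℕ) : ℤ)
      = f i + f ((i : ℤ) - 1) + f ((i : ℤ) - 2) + f ((i : ℤ) - 3) := by
  rw [Fin.sum_univ_eq_sum_range (fun m : ℕ => f (m : ℤ)) n]
  have hsub : ∑ m ∈ Finset.range n, f (m : ℤ) = ∑ m ∈ Finset.range (i + 1), f (m : ℤ) := by
    symm
    apply Finset.sum_subset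
    · intro x hx
      simp only [Finset.mem_range] at *
      omega
    · intro x _ hx
      simp only [Finset.mem_range] at hx
      exact hgt _ (by omega)
  rw [hsub]
  match i, hlt with
  | 0, _ => simp [hneg]
  | 1, _ => simp [Finset.sum_range_succ, hneg, add_comm]
  | 2, _ =>
    rw [hneg (((2 : ℕ) : ℤ) - 3) (by norm_num)]
    simp [Finset.sum_range_succ]
    ring
  | k + 3, hlt =>
    have h0 : ∑ m ∈ Finset.range k, f (m : ℤ) = 0 := by
      apply Finset.sum_eq_zero
      intro x hx
      simp only [Finset.mem_range] at hx
      exact hlt _ (by push_cast; omega)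
    simp only [Finset.sum_range_succ, h0]
    have e1 : ((k + 3 : ℕ) : ℤ) - 1 = ((k + 2 : ℕ) : ℤ) := by push_cast; ring
    have e2 : ((k + 3 : ℕ) : ℤ) - 2 = ((k + 1 : ℕ) : ℤ) := by push_cast; ring
    have e3 : ((k + 3 : ℕ) : ℤ) - 3 = (k : ℤ) := by push_cast; ring
    rw [e1, e2, e3]
    ring

/-- The recursion of the algorithm is exactly the entrywise identity `A = L U`, read off
on each of the seven diagonals of `A`. -/
theorem ent_eq_window {K : Type*} [Field K] {N : ℕ}
    (A : Matrix (Fin N) (Fin N) K) (hA : Heptadiagonal A)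
    (δ ξ μ α β γ : ℤ → K) (hseq : AlgSeqs A δ ξ μ α β γ)
    (hμ : ∀ i : ℤ, 0 ≤ i → i < (N : ℤ) → μ i ≠ 0) (i j : Fin N) :
    A i j = μ (i : ℕ) * upperEntry α β γ (i : ℕ) (j : ℕ)
      + δ (i : ℕ) * upperEntry α β γ ((i : ℕ) - 1) (j : ℕ)
      + ξ (i : ℕ) * upperEntry α β γ ((i : ℕ) - 2) (j : ℕ)
      + ent A (i : ℕ) ((i : ℕ) - 3) * upperEntry α β γ ((i : ℕ) - 3) (j : ℕ) := by
  have hz := hA i j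
  have he := ent_natCast A i j
  have hi0 : (0 : ℤ) ≤ (i : ℕ) := by omega
  have hiN : ((i : ℕ) : ℤ) < N := by omega
  have hne := hμ _ hi0 hiN
  obtain ⟨h1, h2, h3, h4, h5, h6⟩ := hseq.2 _ hi0 hiN
  rw [← he] at hz ⊢
  generalize (((i : ℕ) : ℤ)) = x at *
  generalize (((j : ℕ) : ℤ)) = y at *
  rw [eq_div_iff hne] at h4 h5 h6
  by_cases hd : 3 < |x - y|
  · rw [hz hd]
    rw [lt_abs] at hd
    rw [upperEntry_off (i := x) _ _ _ (by omega), upperEntry_off (i := x - 1) _ _ _ (by omega),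
      upperEntry_off (i := x - 2) _ _ _ (by omega), upperEntry_off (i := x - 3) _ _ _ (by omega)]
    ring
  · rw [not_lt, abs_le] at hd
    have hy : y = x - 3 ∨ y = x - 2 ∨ y = x - 1 ∨ y = x ∨ y = x + 1 ∨ y = x + 2 ∨ y = x + 3 := by
      omega
    rcases hy with rfl | rfl | rfl | rfl | rfl | rfl | rfl
    · rw [upperEntry_off (i := x) _ _ _ (by omega), upperEntry_off (i := x - 1) _ _ _ (by omega),
        upperEntry_off (i := x - 2) _ _ _ (by omega), upperEntry_diag0 (i := x - 3) _ _ _ (by omega)]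
      ring
    · rw [upperEntry_off (i := x) _ _ _ (by omega), upperEntry_off (i := x - 1) _ _ _ (by omega),
        upperEntry_diag0 (i := x - 2) _ _ _ (by omega), upperEntry_diag1 (i := x - 3) _ _ _ (by omega)]
      linear_combination -h2
    · rw [upperEntry_off (i := x) _ _ _ (by omega), upperEntry_diag0 (i := x - 1) _ _ _ (by omega),
        upperEntry_diag1 (i := x - 2) _ _ _ (by omega), upperEntry_diag2 (i := x - 3) _ _ _ (by omega)]
      linear_combination -h1 - α (x - 2) * h2
    · rw [upperEntry_diag0 (i := y) _ _ _ (by omega), upperEntry_diag1 (i := y - 1) _ _ _ (by omega),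
        upperEntry_diag2 (i := y - 2) _ _ _ (by omega), upperEntry_diag3 (i := y - 3) _ _ _ (by omega)]
      linear_combination -h3
    · rw [upperEntry_diag1 (i := x) _ _ _ (by omega), upperEntry_diag2 (i := x - 1) _ _ _ (by omega),
        upperEntry_diag3 (i := x - 2) _ _ _ (by omega), upperEntry_off (i := x - 3) _ _ _ (by omega)]
      linear_combination -h4
    · rw [upperEntry_diag2 (i := x) _ _ _ (by omega), upperEntry_diag3 (i := x - 1) _ _ _ (by omega),
        upperEntry_off (i := x - 2) _ _ _ (by omega), upperEntry_off (i := x - 3) _ _ _ (by omega)]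
      linear_combination -h5
    · rw [upperEntry_diag3 (i := x) _ _ _ (by omega), upperEntry_off (i := x - 1) _ _ _ (by omega),
        upperEntry_off (i := x - 2) _ _ _ (by omega), upperEntry_off (i := x - 3) _ _ _ (by omega)]
      linear_combination -h6

/-- Because `L` is lower and `U` upper triangular, `A = L U` restricts to an `L U`
factorization of every leading block. -/
theorem submatrix_eq_mul {K : Type*} [Field K] {N : ℕ}
    (A : Matrix (Fin N) (Fin N) K) (hA : Heptadiagonal A)
    (δ ξ μ α β γ : ℤ → K) (hseq : AlgSeqs A δ ξ μ α β γ)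
    (hμ : ∀ i : ℤ, 0 ≤ i → i < (N : ℤ) → μ i ≠ 0) (n : ℕ) (hn : n ≤ N) :
    A.submatrix (Fin.castLE hn) (Fin.castLE hn)
      = (Matrix.of fun i j : Fin n =>
          lowerEntry (fun i => ent A i (i - 3)) δ ξ μ (i : ℕ) (j : ℕ))
        * (Matrix.of fun i j : Fin n => upperEntry α β γ (i : ℕ) (j : ℕ)) := by
  ext i j
  simp only [Matrix.mul_apply, Matrix.of_apply, Matrix.submatrix_apply]
  rw [sum_window (fun m : ℤ => lowerEntry (fun i => ent A i (i - 3)) δ ξ μ (i : ℕ) m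
      * upperEntry α β γ m (j : ℕ)) n i i.2]
  · rw [ent_eq_window A hA δ ξ μ α β γ hseq hμ]
    rw [lowerEntry_diag0 (j := (i : ℕ)) _ _ _ _ rfl,
      lowerEntry_diag1 (j := (i : ℕ) - 1) _ _ _ _ (by omega),
      lowerEntry_diag2 (j := (i : ℕ) - 2) _ _ _ _ (by omega),
      lowerEntry_diag3 (j := (i : ℕ) - 3) _ _ _ _ (by omega)]
    rfl
  · intro m hm
    rw [upperEntry_of_neg (fun i hi => (hseq.1 i hi).2.2.2) m _ hm (by omega), mul_zero]
  · intro m hm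
    rw [lowerEntry_off _ _ _ _ (by omega), zero_mul]
  · intro m hm
    rw [lowerEntry_off _ _ _ _ (by omega), zero_mul]

theorem lpm_eq_prod {K : Type*} [Field K] {N : ℕ}
    (A : Matrix (Fin N) (Fin N) K) (hA : Heptadiagonal A)
    (δ ξ μ α β γ : ℤ → K) (hseq : AlgSeqs A δ ξ μ α β γ)
    (hμ : ∀ i : ℤ, 0 ≤ i → i < (N : ℤ) → μ i ≠ 0) (k : ℕ) (hk : k + 1 ≤ N) :
    lpm A k hk = ∏ j ∈ Finset.range (k + 1), μ (j : ℤ) := by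
  unfold lpm
  rw [submatrix_eq_mul A hA δ ξ μ α β γ hseq hμ (k + 1) hk, Matrix.det_mul,
    Matrix.det_of_isLowerTriangular, Matrix.det_of_isUpperTriangular]
  · simp only [Matrix.of_apply, lowerEntry, upperEntry, if_true, Finset.prod_const_one, mul_one]
    exact Fin.prod_univ_eq_prod_range (fun m : ℕ => μ (m : ℤ)) (k + 1)
  · intro i j hij
    have hij' : (j : ℕ) < (i : ℕ) := hij
    exact upperEntry_off (i := (i : ℕ)) (j := (j : ℕ)) _ _ _ (by omega)
  · intro i j hij
    have hij' : (i : ℕ) < (j : ℕ) := hij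
    rw [Matrix.of_apply, lowerEntry_off _ _ _ _ (by omega)]

/-- if all pivots `μ i` are nonzero, then the `k`-th leading principal
minor of `A` is `M_k = ∏_{j=0}^{k} μ j`, and consequently each pivot is the ratio of
consecutive leading principal minors, `μ_k = M_k / M_{k-1}` with `M_{-1} = 1`. -/
theorem heptadiagonal_minors_eq_prod_pivots {K : Type*} [Field K] {N : ℕ} (hN : 1 ≤ N)
    (A : Matrix (Fin N) (Fin N) K) (hA : Heptadiagonal A)
    (δ ξ μ α β γ : ℤ → K) (hseq : AlgSeqs A δ ξ μ α β γ)
    (hμ : ∀ i : ℤ, 0 ≤ i → i < (N : ℤ) → μ i ≠ 0) :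
    (∀ k : ℕ, (hk : k + 1 ≤ N) →
        lpm A k hk = ∏ j ∈ Finset.range (k + 1), μ (j : ℤ)) ∧
    (∀ k : ℕ, (hk : k + 1 ≤ N) →
        μ (k : ℤ) = lpm A k hk / (if h : k = 0 then 1 else lpm A (k - 1) (by omega))) := by
  have hprod := lpm_eq_prod A hA δ ξ μ α β γ hseq hμ
  refine ⟨hprod, fun k hk => ?_⟩
  rw [hprod k hk]
  rcases k with _ | k
  · simp
  · rw [dif_neg (Nat.succ_ne_zero k)]
    have hprev : lpm A (k + 1 - 1) (by omega) = ∏ j ∈ Finset.range (k + 1), μ (j : ℤ) :=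
      hprod k (by omega)
    have hne : ∏ j ∈ Finset.range (k + 1), μ (j : ℤ) ≠ 0 := by
      refine Finset.prod_ne_zero_iff.mpr fun j hj => hμ _ (by omega) ?_
      have := Finset.mem_range.mp hj
      omega
    rw [hprev, Finset.prod_range_succ, mul_div_cancel_left₀ _ hne]
end

section
/- If A is an N×N heptadiagonal matrix over a field K whose leading principal minors M_0, M_1, …, M_{N−1} are all nonzero, then A admits a factorization A = L·U in which L is lower triangular with L i j = 0 whenever i − j > 3, and U is unit upper triangular (all diagonal entries equal to 1) with U i j = 0 whenever j − i > 3. -/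
/-!
Induction on the size, with the bandwidth carried along. Write the matrix in block form as
`[B, c; r, d]`, where `B` is the leading block of size one less. If `B = L * U`, then the minor
`det B ≠ 0` makes `L` and `U` invertible, so `l ᵥ* U = r` and `L *ᵥ u = c` are solvable, and
`[B, c; r, d] = [L, 0; l, d - l ⬝ᵥ u] * [U, u; 0, 1]`. The band structure survives because
forward substitution preserves leading zeros (`forward_subst_zero`): `r` and `c` vanish except in
their last three coordinates, hence so do `l` and `u`.
-/

open Matrix Finset

/-- Forward substitution preserves leading zeros: if `T` is lower triangular with nonzero diagonal
and `T *ᵥ x` vanishes in its coordinates of index below `m`, then so does `x`. -/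
theorem forward_subst_zero {K : Type*} [Field K] {n : ℕ} (T : Matrix (Fin n) (Fin n) K)
    (hT : ∀ i j : Fin n, i < j → T i j = 0) (hd : ∀ i, T i i ≠ 0) (x : Fin n → K) (m : ℕ)
    (hx : ∀ j : Fin n, (j : ℕ) < m → (T *ᵥ x) j = 0) :
    ∀ j : Fin n, (j : ℕ) < m → x j = 0 := by
  intro j
  induction j using WellFoundedLT.induction with
  | ind j ih =>
    intro hj
    have h := hx j hj
    rw [Matrix.mulVec, dotProduct, Finset.sum_eq_single j] at h
    · exact (mul_eq_zero.mp h).resolve_left (hd j)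
    · intro k _ hk
      rcases lt_or_gt_of_ne hk with hlt | hgt
      · rw [ih k hlt (lt_trans hlt hj), mul_zero]
      · rw [hT j k hgt, zero_mul]
    · simp

/-- The factorization in the form used for the induction. The hypothesis on minors includes the
empty one, which is `1`. -/
theorem exists_band_LU_aux {K : Type*} [Field K] : ∀ {n : ℕ} (A : Matrix (Fin n) (Fin n) K),
    (∀ i j : Fin n, (j : ℕ) + 3 < i → A i j = 0) →
    (∀ i j : Fin n, (i : ℕ) + 3 < j → A i j = 0) →
    (∀ k : ℕ, (hk : k ≤ n) → (A.submatrix (Fin.castLE hk) (Fin.castLE hk)).det ≠ 0) →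
    ∃ L U : Matrix (Fin n) (Fin n) K,
      A = L * U ∧
      (∀ i j : Fin n, i < j → L i j = 0) ∧
      (∀ i j : Fin n, (j : ℕ) + 3 < i → L i j = 0) ∧
      (∀ i : Fin n, U i i = 1) ∧
      (∀ i j : Fin n, j < i → U i j = 0) ∧
      (∀ i j : Fin n, (i : ℕ) + 3 < j → U i j = 0) := by
  intro n
  induction n with
  | zero =>
    intro A _ _ _
    exact ⟨0, 0, Subsingleton.elim _ _, fun i => i.elim0, fun i => i.elim0, fun i => i.elim0,
      fun i => i.elim0, fun i => i.elim0⟩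
  | succ n ih =>
    intro A hlow hup hm
    obtain ⟨L, U, hB, hL, hLb, hU1, hU, hUb⟩ := ih (A.submatrix Fin.castSucc Fin.castSucc)
      (fun i j h => hlow _ _ h) (fun i j h => hup _ _ h)
      (fun k hk => hm k (Nat.le_succ_of_le hk))
    have hdet : (L * U).det ≠ 0 := by
      rw [← hB]
      exact hm n (Nat.le_succ n)
    rw [Matrix.det_mul] at hdet
    have hLdet : L.det ≠ 0 := left_ne_zero_of_mul hdet
    have hUdet : U.det ≠ 0 := right_ne_zero_of_mul hdet
    have hLd : ∀ i, L i i ≠ 0 := by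
      rw [Matrix.det_of_isLowerTriangular (M := L) (fun i j h => hL i j h)] at hLdet
      exact fun i => Finset.prod_ne_zero_iff.mp hLdet i (Finset.mem_univ i)
    obtain ⟨u, hu⟩ : ∃ u, L *ᵥ u = fun i => A i.castSucc (Fin.last n) :=
      ⟨L⁻¹ *ᵥ fun i => A i.castSucc (Fin.last n), by
        rw [Matrix.mulVec_mulVec, Matrix.mul_nonsing_inv _ hLdet.isUnit, Matrix.one_mulVec]⟩
    obtain ⟨l, hl⟩ : ∃ l, l ᵥ* U = fun j => A (Fin.last n) j.castSucc :=
      ⟨(fun j => A (Fin.last n) j.castSucc) ᵥ* U⁻¹, by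
        rw [Matrix.vecMul_vecMul, Matrix.nonsing_inv_mul _ hUdet.isUnit, Matrix.vecMul_one]⟩
    have hu0 : ∀ i : Fin n, (i : ℕ) + 3 < n → u i = 0 := fun i hi =>
      forward_subst_zero L hL hLd u (n - 3)
        (fun j hj => by rw [hu]; exact hup _ _ (by simp; omega)) i (by omega)
    have hl0 : ∀ i : Fin n, (i : ℕ) + 3 < n → l i = 0 := fun i hi =>
      forward_subst_zero Uᵀ (fun i j h => hU j i h) (fun i => by simp [hU1]) l (n - 3)
        (fun j hj => by
          rw [Matrix.mulVec_transpose, hl]; exact hlow _ _ (by simp; omega)) i (by omega)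
    refine ⟨Matrix.of fun i j => Fin.lastCases
        (Fin.lastCases (A (Fin.last n) (Fin.last n) - l ⬝ᵥ u) l j)
        (fun i' => Fin.lastCases 0 (L i') j) i,
      Matrix.of fun i j => Fin.lastCases (Fin.lastCases 1 (fun _ => 0) j)
        (fun i' => Fin.lastCases (u i') (U i') j) i, ?_, ?_, ?_, ?_, ?_, ?_⟩
    · ext i j
      rw [Matrix.mul_apply, Fin.sum_univ_castSucc]
      induction i using Fin.lastCases with
      | last =>
        induction j using Fin.lastCases with
        | last => simp [dotProduct]
        | cast j => simpa [Matrix.vecMul, dotProduct] using (congrFun hl j).symm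
      | cast i =>
        induction j using Fin.lastCases with
        | last => simpa [Matrix.mulVec, dotProduct] using (congrFun hu i).symm
        | cast j => simpa [Matrix.mul_apply] using congrFun (congrFun hB i) j
    · intro i j hij
      induction i using Fin.lastCases with
      | last =>
        induction j using Fin.lastCases with
        | last => simp at hij
        | cast j => exact absurd hij (not_lt.mpr (Fin.le_last _))
      | cast i =>
        induction j using Fin.lastCases with
        | last => simp
        | cast j => simpa using hL i j (by simpa using hij)
    · intro i j hij
      induction i using Fin.lastCases with
      | last =>
        induction j using Fin.lastCases with
        | last => simp at hij
        | cast j => simpa using hl0 j (by simpa using hij)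
      | cast i =>
        induction j using Fin.lastCases with
        | last => simp
        | cast j => simpa using hLb i j (by simpa using hij)
    · intro i
      induction i using Fin.lastCases with
      | last => simp
      | cast i => simpa using hU1 i
    · intro i j hij
      induction i using Fin.lastCases with
      | last =>
        induction j using Fin.lastCases with
        | last => simp at hij
        | cast j => simp
      | cast i =>
        induction j using Fin.lastCases with
        | last => exact absurd hij (not_lt.mpr (Fin.le_last _))
        | cast j => simpa using hU i j (by simpa using hij)
    · intro i j hij
      induction i using Fin.lastCases with
      | last =>
        induction j using Fin.lastCases with
        | last => simp at hij
        | cast j => simp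
      | cast i =>
        induction j using Fin.lastCases with
        | last => simpa using hu0 i (by simpa using hij)
        | cast j => simpa using hUb i j (by simpa using hij)

/-- a heptadiagonal matrix whose leading principal minors are all nonzero
admits a factorization `A = L * U` with `L` lower triangular with lower bandwidth `3`
and `U` unit upper triangular with upper bandwidth `3`. -/
theorem heptadiagonal_exists_band_LU {K : Type*} [Field K] {N : ℕ} (hN : 1 ≤ N)
    (A : Matrix (Fin N) (Fin N) K) (hA : Heptadiagonal A)
    (hm : ∀ k : ℕ, (hk : k + 1 ≤ N) → lpm A k hk ≠ 0) :
    ∃ L U : Matrix (Fin N) (Fin N) K,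
      A = L * U ∧
      (∀ i j : Fin N, (i : ℕ) < (j : ℕ) → L i j = 0) ∧
      (∀ i j : Fin N, 3 < (i : ℤ) - (j : ℤ) → L i j = 0) ∧
      (∀ i : Fin N, U i i = 1) ∧
      (∀ i j : Fin N, (j : ℕ) < (i : ℕ) → U i j = 0) ∧
      (∀ i j : Fin N, 3 < (j : ℤ) - (i : ℤ) → U i j = 0) := by
  obtain ⟨L, U, h, hL, hLb, hU1, hU, hUb⟩ := exists_band_LU_aux A
    (fun i j hij => hA i j (lt_abs.mpr (Or.inl (by omega))))
    (fun i j hij => hA i j (lt_abs.mpr (Or.inr (by omega))))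
    (fun k hk => by
      cases k with
      | zero => simp
      | succ k => exact hm k hk)
  exact ⟨L, U, h, hL, fun i j hij => hLb i j (by omega), hU1, fun i j hij => hU i j hij,
    fun i j hij => hUb i j (by omega)⟩
end

section
/- Under the assumption that μ_i ≠ 0 for every i = 0,…,N−1, given a vector y in K^N, the vector z defined recursively by z_i = (y_i − δ_i z_{i−1} − ξ_i z_{i−2} − c*_i z_{i−3}) / μ_i (with the convention that terms with negative indices are 0) satisfies L·z = y, where L is the lower triangular band matrix with L i i = μ_i, L i (i−1) = δ_i, L i (i−2) = ξ_i, L i (i−3) = c*_i and all other entries 0. -/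
/-!
Row `i` of `L` is a sum of four one-entry rows, one for each of the offsets `0, 1, 2, 3` below
the diagonal.  By `sum_offset` the entry at offset `k` contributes `L i (i-k) * z (i-k)`, also when
`i - k` is negative, since `z` vanishes there.  Hence `(L z) i` equals
`μ_i z_i + δ_i z_{i-1} + ξ_i z_{i-2} + c*_i z_{i-3}`, which is `y_i` by the recursion for `z_i`
multiplied by `μ_i ≠ 0`.
-/

open Matrix Finset

/-- A row whose only nonzero entry is `c`, at offset `k` left of the diagonal, pairs with `z` to
`c * z (i - k)`; if that position is out of range, both sides are `0`. -/
lemma sum_offset {K : Type*} [Field K] {N : ℕ} (z : ℤ → K) (hz0 : ∀ i : ℤ, i < 0 → z i = 0)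
    (i : Fin N) (k : ℤ) (hk : 0 ≤ k) (c : K) :
    ∑ j : Fin N, (if (i : ℤ) = (j : ℤ) + k then c else 0) * z (j : ℤ) = c * z ((i : ℤ) - k) := by
  have hi := i.isLt
  by_cases h : (i : ℤ) - k < 0
  · rw [hz0 _ h, mul_zero]
    refine Finset.sum_eq_zero fun j _ => ?_
    rw [if_neg (by omega), zero_mul]
  · have hj : ((i : ℤ) - k).toNat < N := by omega
    rw [Finset.sum_eq_single (⟨((i : ℤ) - k).toNat, hj⟩ : Fin N)]
    · have e : (((i : ℤ) - k).toNat : ℤ) = (i : ℤ) - k := by omega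
      simp only [e]
      rw [if_pos (by ring)]
    · intro j _ hne
      rw [if_neg, zero_mul]
      intro hij
      apply hne
      ext
      simp only
      omega
    · simp

/-- if all pivots `μ i` are nonzero, the forward sweep
`z_i = (y_i - δ_i z_{i-1} - ξ_i z_{i-2} - c*_i z_{i-3}) / μ_i` solves `L z = y`, where
`L` is the lower triangular band matrix of the algorithm. -/
theorem forward_sweep_solves_lower {K : Type*} [Field K] {N : ℕ} (hN : 1 ≤ N)
    (A : Matrix (Fin N) (Fin N) K) (hA : Heptadiagonal A)
    (δ ξ μ α β γ : ℤ → K) (hseq : AlgSeqs A δ ξ μ α β γ)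
    (hμ : ∀ i : ℤ, 0 ≤ i → i < (N : ℤ) → μ i ≠ 0)
    (y : Fin N → K) (z : ℤ → K)
    (hz0 : ∀ i : ℤ, i < 0 → z i = 0)
    (hz : ∀ i : ℤ, 0 ≤ i → i < (N : ℤ) →
      z i = (vent y i - δ i * z (i - 1) - ξ i * z (i - 2)
              - ent A i (i - 3) * z (i - 3)) / μ i) :
    (Lmat A δ ξ μ).mulVec (fun i : Fin N => z (i : ℤ)) = y := by
  funext i
  have h0 : (0 : ℤ) ≤ (i : ℤ) := by omega
  have hN' : (i : ℤ) < (N : ℤ) := by omega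
  have hrow : ∀ j : Fin N, Lmat A δ ξ μ i j =
      (if (i : ℤ) = (j : ℤ) + 0 then μ (i : ℤ) else 0)
      + (if (i : ℤ) = (j : ℤ) + 1 then δ (i : ℤ) else 0)
      + (if (i : ℤ) = (j : ℤ) + 2 then ξ (i : ℤ) else 0)
      + (if (i : ℤ) = (j : ℤ) + 3 then ent A (i : ℤ) ((i : ℤ) - 3) else 0) := by
    intro j
    simp only [Lmat, Matrix.of_apply, add_zero]
    split_ifs <;> first | omega | simp
  have hy : vent y (i : ℤ) = y i := by
    simp [vent]
  have hzi := hz i h0 hN'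
  rw [eq_div_iff (hμ i h0 hN'), hy] at hzi
  simp only [Matrix.mulVec, dotProduct, hrow, add_mul, Finset.sum_add_distrib]
  rw [sum_offset z hz0 i 0 (by norm_num), sum_offset z hz0 i 1 (by norm_num),
    sum_offset z hz0 i 2 (by norm_num), sum_offset z hz0 i 3 (by norm_num), sub_zero]
  linear_combination hzi
end
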